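/- arXiv:2111.01047 — 6 statements merged into one kernel-verified Lean document; each statement's English description precedes it below -/
import Mathlib

section
/- Let n ≥ 2 and let k be an integer with 2 ≤ k ≤ n. If g : ℝ₊^n → ℝ is a convex function satisfying g(x) ≤ Q_k(x) for all x ∈ ℝ₊^n (where ℝ₊^n denotes the set of vectors with all coordinates nonnegative), then g(x) ≤ 0 for all x ∈ ℝ₊^n. Consequently, since Q_k(x) ≥ 0 on ℝ₊^n, the lower convex envelope of Q_k on ℝ₊^n is the zero function. -/
/-!
Every point `x` of the orthant is the average of the `n` axis vectors `n xᵢ eᵢ`. Each of these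
has at most one nonzero coordinate, so its `k`-th largest coordinate vanishes for `k ≥ 2`
(`Qk_single_eq_zero`), and Jensen's inequality gives `g x ≤ 0`. Nonnegativity of `Qk` is clear, as
its value is one of the coordinates.
-/

/-- `Qk k x` is the `k`-th largest coordinate of `x : Fin n → ℝ` (meaningful for `1 ≤ k ≤ n`):
`Tuple.sort x` sorts the coordinates in nondecreasing order, so the `k`-th largest one
sits at (0-indexed) position `n - k`. -/
noncomputable def Qk {n : ℕ} (k : ℕ) (x : Fin n → ℝ) : ℝ :=
  if h : n - k < n then x (Tuple.sort x ⟨n - k, h⟩) else 0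

/-- A vector supported on one coordinate, with a nonnegative entry there, has `k`-th largest
coordinate zero as soon as `k ≥ 2`: were the nonzero entry in sorted position `n - k`, the
distinct coordinate in the last position `n - 1` would be at least as large. -/
lemma Qk_single_eq_zero {n k : ℕ} (hk : 2 ≤ k) (hkn : k ≤ n) (i : Fin n) {c : ℝ} (hc : 0 ≤ c) :
    Qk k (Pi.single i c : Fin n → ℝ) = 0 := by
  have h1 : n - k < n := by omega
  have h2 : n - 1 < n := by omega
  rw [Qk, dif_pos h1]
  set x : Fin n → ℝ := Pi.single i c with hx
  have hzero : ∀ j, j ≠ i → x j = 0 := fun j hj => by simp [hx, hj]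
  have hmono : x (Tuple.sort x ⟨n - k, h1⟩) ≤ x (Tuple.sort x ⟨n - 1, h2⟩) :=
    Tuple.monotone_sort x (show n - k ≤ n - 1 by omega)
  by_cases hi : Tuple.sort x ⟨n - k, h1⟩ = i
  · have hne : Tuple.sort x ⟨n - 1, h2⟩ ≠ i := by
      intro h
      have h3 := (Tuple.sort x).injective (h.trans hi.symm)
      rw [Fin.mk.injEq] at h3
      omega
    have hlast : x (Tuple.sort x ⟨n - 1, h2⟩) = 0 := hzero _ hne
    have hval : x (Tuple.sort x ⟨n - k, h1⟩) = c := by rw [hi, hx, Pi.single_eq_same]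
    linarith
  · exact hzero _ hi

theorem convex_minorant_nonpos_on_orthant (n k : ℕ) (hn : 2 ≤ n) (hk : 2 ≤ k) (hkn : k ≤ n)
    (g : (Fin n → ℝ) → ℝ)
    (hg : ConvexOn ℝ {x : Fin n → ℝ | ∀ i, 0 ≤ x i} g)
    (hle : ∀ x : Fin n → ℝ, (∀ i, 0 ≤ x i) → g x ≤ Qk k x) :
    (∀ x : Fin n → ℝ, (∀ i, 0 ≤ x i) → g x ≤ 0) ∧
      (∀ x : Fin n → ℝ, (∀ i, 0 ≤ x i) → 0 ≤ Qk k x) := by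
  refine ⟨fun x hx => ?_, fun x hx => ?_⟩
  · have hn0 : (n : ℝ) ≠ 0 := by
      have : n ≠ 0 := by omega
      exact_mod_cast this
    have hc : ∀ i, 0 ≤ (n : ℝ) * x i := fun i => mul_nonneg n.cast_nonneg (hx i)
    have hp : ∀ i j, 0 ≤ (Pi.single i ((n : ℝ) * x i) : Fin n → ℝ) j := by
      intro i
      have h : (0 : Fin n → ℝ) ≤ Pi.single i ((n : ℝ) * x i) := Pi.single_nonneg.2 (hc i)
      exact h
    -- `x` is the average of the `n` axis vectors `n xᵢ eᵢ`.
    have hsum : ∑ i : Fin n, (n : ℝ)⁻¹ • (Pi.single i ((n : ℝ) * x i) : Fin n → ℝ) = x := by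
      rw [← Finset.univ_sum_single x]
      refine Finset.sum_congr rfl fun i _ => ?_
      rw [Finset.univ_sum_single x, ← Pi.single_smul, smul_eq_mul, inv_mul_cancel_left₀ hn0]
    have hJ := hg.map_sum_le (t := Finset.univ) (w := fun _ : Fin n => (n : ℝ)⁻¹)
      (p := fun i => (Pi.single i ((n : ℝ) * x i) : Fin n → ℝ))
      (fun _ _ => inv_nonneg.2 n.cast_nonneg) (by simp [hn0]) (fun i _ => hp i)
    rw [hsum] at hJ
    refine hJ.trans (Finset.sum_nonpos fun i _ => ?_)
    exact mul_nonpos_of_nonneg_of_nonpos (inv_nonneg.2 n.cast_nonneg)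
      ((hle _ (hp i)).trans (Qk_single_eq_zero hk hkn i (hc i)).le)
  · unfold Qk
    split_ifs
    · exact hx _
    · exact le_rfl
end

section
/- Let n ≥ 2 and let k be an integer with 2 ≤ k ≤ n. Then there exists no convex function g : ℝ^n → ℝ satisfying g(x) ≤ Q_k(x) for all x ∈ ℝ^n. -/
/-- The vector with `i`-th coordinate `(n - 1) M` and all other coordinates `-M`. -/
def spike {n : ℕ} (M : ℝ) (i : Fin n) : Fin n → ℝ :=
  fun j => (if i = j then n * M else 0) - M

theorem Qk_spike_le {n k : ℕ} (hk : 2 ≤ k) (hkn : k ≤ n) (M : ℝ) (i : Fin n) :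
    Qk k (spike M i) ≤ -M := by
  have h : n - k < n := by omega
  have hl : n - 1 < n := by omega
  rw [Qk, dif_pos h]
  -- Position `n - 1` carries the maximum; positions `n - k` and `n - 1` differ since `k ≥ 2`.
  have hmono : spike M i (Tuple.sort (spike M i) ⟨n - k, h⟩)
      ≤ spike M i (Tuple.sort (spike M i) ⟨n - 1, hl⟩) :=
    Tuple.monotone_sort (spike M i) (Fin.mk_le_mk.2 (by omega))
  by_cases hp : i = Tuple.sort (spike M i) ⟨n - k, h⟩
  · have hq : i ≠ Tuple.sort (spike M i) ⟨n - 1, hl⟩ := by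
      intro hq
      have := congrArg Fin.val ((Tuple.sort (spike M i)).injective (hp.symm.trans hq))
      simp only at this
      omega
    refine hmono.trans (le_of_eq ?_)
    generalize Tuple.sort (spike M i) ⟨n - 1, hl⟩ = q at hq
    simp [spike, hq]
  · generalize Tuple.sort (spike M i) ⟨n - k, h⟩ = p at hp
    simp [spike, hp]

theorem sum_spike {n : ℕ} (M : ℝ) :
    ∑ i : Fin n, (n : ℝ)⁻¹ • spike M i = 0 := by
  ext j
  simp [spike, Finset.sum_apply, ← Finset.mul_sum]

theorem no_convex_minorant_on_whole_space (n k : ℕ) (hn : 2 ≤ n) (hk : 2 ≤ k) (hkn : k ≤ n) :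
    ¬ ∃ g : (Fin n → ℝ) → ℝ,
        ConvexOn ℝ (Set.univ : Set (Fin n → ℝ)) g ∧ ∀ x : Fin n → ℝ, g x ≤ Qk k x := by
  rintro ⟨g, hg, hle⟩
  have hn0 : (n : ℝ) ≠ 0 := by
    have : n ≠ 0 := by omega
    exact_mod_cast this
  have jensen := hg.map_sum_le (t := Finset.univ) (w := fun _ : Fin n => (n : ℝ)⁻¹)
    (p := spike (|g 0| + 1)) (fun _ _ => by positivity) (by simp [hn0]) (fun _ _ => Set.mem_univ _)
  rw [sum_spike] at jensen
  have bound : ∑ i : Fin n, (n : ℝ)⁻¹ • g (spike (|g 0| + 1) i)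
      ≤ ∑ _i : Fin n, (n : ℝ)⁻¹ • (-(|g 0| + 1)) :=
    Finset.sum_le_sum fun i _ =>
      smul_le_smul_of_nonneg_left ((hle _).trans (Qk_spike_le hk hkn _ i)) (by positivity)
  rw [Finset.sum_const, Finset.card_univ, Fintype.card_fin, nsmul_eq_mul, smul_eq_mul,
    mul_inv_cancel_left₀ hn0] at bound
  linarith [neg_abs_le (g 0)]
end

section
/- Let 1 ≤ k ≤ n and let x ∈ [0,1]^n. Then for every subset W of {1,…,n} with |W| ≥ k, Q_k(x) ≥ (1/(|W| − k + 1)) · ( (Σ_{i ∈ W} x_i) − k + 1 ). -/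
/-- In sorted order, the coordinates exceeding `Qk k x` all sit strictly after position
`n - k`, which leaves only `k - 1` positions. -/
theorem card_gt_Qk_le {n k : ℕ} (hk : 1 ≤ k) (hkn : k ≤ n) (x : Fin n → ℝ) :
    (Finset.univ.filter fun i => Qk k x < x i).card + 1 ≤ k := by
  have h : n - k < n := by omega
  have hsub : (Finset.univ.filter fun i => Qk k x < x i) ⊆
      (Finset.Ioi (⟨n - k, h⟩ : Fin n)).image (Tuple.sort x) := by
    intro i hi
    simp only [Finset.mem_filter, Finset.mem_univ, true_and, Qk, dif_pos h] at hi
    refine Finset.mem_image.2 ⟨(Tuple.sort x).symm i, ?_, by simp⟩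
    rw [Finset.mem_Ioi]
    by_contra hle
    have hmono := Tuple.monotone_sort x (not_lt.1 hle)
    simp only [Function.comp_apply, Equiv.apply_symm_apply] at hmono
    exact absurd hi (not_lt.2 hmono)
  have hcard := (Finset.card_le_card hsub).trans Finset.card_image_le
  rw [Fin.card_Ioi] at hcard
  simp only at hcard
  omega

theorem symmetric_lower_bound (n k : ℕ) (hk : 1 ≤ k) (hkn : k ≤ n)
    (x : Fin n → ℝ) (hx : ∀ i, 0 ≤ x i ∧ x i ≤ 1)
    (W : Finset (Fin n)) (hW : k ≤ W.card) :
    Qk k x ≥ (1 / ((W.card : ℝ) - k + 1)) * ((∑ i ∈ W, x i) - k + 1) := by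
  have hA := card_gt_Qk_le hk hkn x
  have hq1 : Qk k x ≤ 1 := by
    rw [Qk, dif_pos (by omega : n - k < n)]
    exact (hx _).2
  generalize Qk k x = q at *
  have hsum : ∑ i ∈ W, x i ≤ ∑ i ∈ W, (q + if q < x i then 1 - q else 0) := by
    refine Finset.sum_le_sum fun i _ => ?_
    split_ifs with hi
    · linarith [(hx i).2]
    · linarith
  rw [Finset.sum_add_distrib, ← Finset.sum_filter, Finset.sum_const, Finset.sum_const,
    nsmul_eq_mul, nsmul_eq_mul] at hsum
  have ha : ((W.filter fun i => q < x i).card : ℝ) + 1 ≤ k := by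
    have := Finset.card_le_card
      (Finset.filter_subset_filter (fun i => q < x i) (Finset.subset_univ W))
    exact_mod_cast (by omega : (W.filter fun i => q < x i).card + 1 ≤ k)
  have hWk : (k : ℝ) ≤ W.card := by exact_mod_cast hW
  have hpos : (0 : ℝ) < (W.card : ℝ) - k + 1 := by linarith
  rw [ge_iff_le, one_div, inv_mul_le_iff₀ hpos]
  nlinarith [mul_le_mul_of_nonneg_right ha (sub_nonneg.2 hq1)]
end

section
/- Let 1 ≤ k ≤ n and let x, l, u ∈ ℝ^n satisfy l_i ≤ x_i ≤ u_i for all i. Set L = Q_k(l), and let U ∈ ℝ satisfy U > L and U ≥ Q_k(u). Then for every subset W of {1,…,n} with |W| ≥ k, Q_k(x) ≥ L + ((U − L)/(|W| − k + 1)) · ( Σ_{i ∈ W} (x_i − L)/(max(U, u_i) − L) − k + 1 ). -/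
theorem card_Qk_lt {n k : ℕ} (hk : 1 ≤ k) (hkn : k ≤ n) (x : Fin n → ℝ) :
    (Finset.univ.filter fun i => Qk k x < x i).card < k := by
  have h : n - k < n := by omega
  have hsub : (Finset.univ.filter fun i => Qk k x < x i) ⊆
      (Finset.Ioi (⟨n - k, h⟩ : Fin n)).image (Tuple.sort x) := by
    intro i hi
    simp only [Finset.mem_filter, Finset.mem_univ, true_and, Qk, dif_pos h] at hi
    refine Finset.mem_image.2 ⟨(Tuple.sort x).symm i, ?_, by simp⟩
    rw [Finset.mem_Ioi]
    by_contra hlt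
    have := Tuple.monotone_sort x (not_lt.1 hlt)
    simp only [Function.comp_apply, Equiv.apply_symm_apply] at this
    linarith
  have h1 := (Finset.card_le_card hsub).trans Finset.card_image_le
  rw [Fin.card_Ioi] at h1
  simp only at h1
  omega

theorem le_card_Qk_le {n k : ℕ} (hk : 1 ≤ k) (hkn : k ≤ n) (x : Fin n → ℝ) :
    k ≤ (Finset.univ.filter fun i => Qk k x ≤ x i).card := by
  have h : n - k < n := by omega
  have hsub : (Finset.Ici (⟨n - k, h⟩ : Fin n)).image (Tuple.sort x) ⊆
      (Finset.univ.filter fun i => Qk k x ≤ x i) := by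
    intro i hi
    obtain ⟨j, hj, rfl⟩ := Finset.mem_image.1 hi
    simp only [Finset.mem_filter, Finset.mem_univ, true_and, Qk, dif_pos h]
    exact Tuple.monotone_sort x (Finset.mem_Ici.1 hj)
  have h1 := Finset.card_le_card hsub
  rw [Finset.card_image_of_injective _ (Tuple.sort x).injective, Fin.card_Ici] at h1
  simp only at h1
  omega

theorem Qk_mono {n k : ℕ} (hk : 1 ≤ k) (hkn : k ≤ n) {x y : Fin n → ℝ}
    (hxy : ∀ i, x i ≤ y i) : Qk k x ≤ Qk k y := by
  by_contra! hlt
  have hsub : (Finset.univ.filter fun i => Qk k x ≤ x i) ⊆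
      (Finset.univ.filter fun i => Qk k y < y i) := by
    intro i hi
    simp only [Finset.mem_filter, Finset.mem_univ, true_and] at hi ⊢
    linarith [hxy i]
  have := Finset.card_le_card hsub
  have := card_Qk_lt hk hkn y
  have := le_card_Qk_le hk hkn x
  omega

theorem asymmetric_lower_bound (n k : ℕ) (hk : 1 ≤ k) (hkn : k ≤ n)
    (x l u : Fin n → ℝ) (hlx : ∀ i, l i ≤ x i) (hxu : ∀ i, x i ≤ u i)
    (U : ℝ) (hLU : Qk k l < U) (hUu : Qk k u ≤ U)
    (W : Finset (Fin n)) (hW : k ≤ W.card) :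
    Qk k x ≥ Qk k l + ((U - Qk k l) / ((W.card : ℝ) - k + 1)) *
      ((∑ i ∈ W, (x i - Qk k l) / (max U (u i) - Qk k l)) - k + 1) := by
  have hLq : Qk k l ≤ Qk k x := Qk_mono hk hkn hlx
  have hqU : Qk k x ≤ U := (Qk_mono hk hkn hxu).trans hUu
  have hA := card_Qk_lt hk hkn x
  generalize Qk k l = L at *
  generalize Qk k x = q at *
  have hUL : 0 < U - L := by linarith
  obtain ⟨t, ht⟩ : ∃ t, t = (q - L) / (U - L) := ⟨_, rfl⟩
  have htq : t * (U - L) = q - L := by rw [ht]; field_simp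
  have ht0 : 0 ≤ t := by rw [ht]; exact div_nonneg (by linarith) hUL.le
  have ht1 : t ≤ 1 := by rw [ht, div_le_one hUL]; linarith
  have hterm : ∀ i ∈ W, (x i - L) / (max U (u i) - L) ≤ t + if q < x i then 1 - t else 0 := by
    intro i _
    have hM : U ≤ max U (u i) := le_max_left _ _
    have hM' : u i ≤ max U (u i) := le_max_right _ _
    have hpos : 0 < max U (u i) - L := by linarith
    rw [div_le_iff₀ hpos]
    split_ifs with h
    · linarith [hxu i]
    · -- `x i - L ≤ q - L = t * (U - L)`, and enlarging the denominator only helps as `0 ≤ t`.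
      nlinarith [mul_le_mul_of_nonneg_left hM ht0]
  have hsum := Finset.sum_le_sum hterm
  rw [Finset.sum_add_distrib, ← Finset.sum_filter, Finset.sum_const, Finset.sum_const,
    nsmul_eq_mul, nsmul_eq_mul] at hsum
  have hcard : ((W.filter fun i => q < x i).card : ℝ) ≤ k - 1 := by
    have h1 : (W.filter fun i => q < x i).card ≤ (Finset.univ.filter fun i => q < x i).card :=
      Finset.card_le_card (Finset.filter_subset_filter _ (Finset.subset_univ W))
    have h2 : (W.filter fun i => q < x i).card + 1 ≤ k := by omega
    have h3 : ((W.filter fun i => q < x i).card : ℝ) + 1 ≤ k := by exact_mod_cast h2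
    linarith
  have hD : (0 : ℝ) < (W.card : ℝ) - k + 1 := by
    have : (k : ℝ) ≤ W.card := by exact_mod_cast hW
    linarith
  have hS : (∑ i ∈ W, (x i - L) / (max U (u i) - L)) - k + 1 ≤ t * ((W.card : ℝ) - k + 1) := by
    have := mul_le_mul_of_nonneg_right hcard (sub_nonneg.2 ht1)
    linarith
  have hfin := mul_le_mul_of_nonneg_left hS (div_pos hUL hD).le
  have heq : (U - L) / ((W.card : ℝ) - k + 1) * (t * ((W.card : ℝ) - k + 1)) = q - L := by
    rw [← htq]; field_simp
  linarith
end

section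
/- Let A be an m×n real matrix with entries a_{ij}, let 1 ≤ k ≤ m, and let x̃ ∈ {0,1}^n. Let P be a subset of {1,…,m} with |P| ≥ k such that Q_k(Ax̃) = min_{i ∈ P} Σ_{j=1}^n a_{ij} x̃_j. Then for every x ∈ {0,1}^n, Q_k(Ax) ≥ Q_k(Ax̃) + Σ_{j : x̃_j = 1} (x_j − 1) · max_{i ∈ P} a_{ij} + Σ_{j : x̃_j = 0} x_j · min_{i ∈ P} a_{ij}. Moreover, for x = x̃ this inequality holds with equality. -/
/-- A lower bound for at least `k` coordinates is a lower bound for the `k`-th largest one: those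
coordinates cannot all lie among the `k - 1` positions after `m - k` in the sorted order. -/
lemma le_Qk_of_card_le {m k : ℕ} (hk : 1 ≤ k) (hkm : k ≤ m) (y : Fin m → ℝ) (P : Finset (Fin m))
    (hP : k ≤ P.card) (c : ℝ) (hc : ∀ i ∈ P, c ≤ y i) : c ≤ Qk k y := by
  have h : m - k < m := by omega
  rw [Qk, dif_pos h]
  obtain ⟨i, hi, hle⟩ : ∃ i ∈ P, (Tuple.sort y).symm i ≤ ⟨m - k, h⟩ := by
    by_contra! hcon
    have hsub : P.map (Tuple.sort y).symm.toEmbedding ⊆ Finset.Ioi ⟨m - k, h⟩ := by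
      intro p hp
      obtain ⟨i, hi, rfl⟩ := Finset.mem_map.mp hp
      exact Finset.mem_Ioi.mpr (hcon i hi)
    have hcard := Finset.card_le_card hsub
    rw [Finset.card_map, Fin.card_Ioi] at hcard
    simp only at hcard
    omega
  have hmono := Tuple.monotone_sort y hle
  simp only [Function.comp_apply, Equiv.apply_symm_apply] at hmono
  exact (hc i hi).trans hmono

theorem generated_subset_constraint (m n k : ℕ) (hk : 1 ≤ k) (hkm : k ≤ m)
    (A : Matrix (Fin m) (Fin n) ℝ)
    (xt : Fin n → ℝ) (hxt : ∀ j, xt j = 0 ∨ xt j = 1)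
    (P : Finset (Fin m)) (hP : k ≤ P.card)
    (hQ : Qk k (A.mulVec xt) =
      P.inf' (Finset.card_pos.mp (by omega)) fun i => ∑ j, A i j * xt j) :
    (∀ x : Fin n → ℝ, (∀ j, x j = 0 ∨ x j = 1) →
      Qk k (A.mulVec x) ≥ Qk k (A.mulVec xt) +
        (∑ j ∈ Finset.univ.filter fun j => xt j = 1,
          (x j - 1) * P.sup' (Finset.card_pos.mp (by omega)) fun i => A i j) +
        (∑ j ∈ Finset.univ.filter fun j => xt j = 0,
          x j * P.inf' (Finset.card_pos.mp (by omega)) fun i => A i j)) ∧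
    Qk k (A.mulVec xt) = Qk k (A.mulVec xt) +
        (∑ j ∈ Finset.univ.filter fun j => xt j = 1,
          (xt j - 1) * P.sup' (Finset.card_pos.mp (by omega)) fun i => A i j) +
        (∑ j ∈ Finset.univ.filter fun j => xt j = 0,
          xt j * P.inf' (Finset.card_pos.mp (by omega)) fun i => A i j) := by
  refine ⟨fun x hx => ?_, ?_⟩
  · refine le_Qk_of_card_le hk hkm _ P hP _ fun i hi => ?_
    have hmin : Qk k (A.mulVec xt) ≤ ∑ j, A i j * xt j := by
      rw [hQ]
      exact Finset.inf'_le (fun i => ∑ j, A i j * xt j) hi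
    have hsplit : (A.mulVec x) i = ∑ j, A i j * xt j + ∑ j, A i j * (x j - xt j) := by
      rw [← Finset.sum_add_distrib]
      simp only [Matrix.mulVec, dotProduct]
      exact Finset.sum_congr rfl fun j _ => by ring
    rw [hsplit, add_assoc, Finset.sum_filter, Finset.sum_filter, ← Finset.sum_add_distrib]
    refine add_le_add hmin (Finset.sum_le_sum fun j _ => ?_)
    -- Only two of the four cases survive `norm_num`: `x j ≠ xt j`, where the row `i` itself
    -- witnesses the comparison of `A i j` with the minimum or the maximum over `P`.
    rcases hxt j with h | h <;> rcases hx j with hj | hj <;> simp only [h, hj] <;> norm_num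
    · exact ⟨i, hi, le_rfl⟩
    · exact ⟨i, hi, le_rfl⟩
  · rw [Finset.sum_eq_zero, Finset.sum_eq_zero]
    · simp
    · intro j hj
      rw [(Finset.mem_filter.mp hj).2, zero_mul]
    · intro j hj
      rw [(Finset.mem_filter.mp hj).2, sub_self, zero_mul]
end

section
/- Let A be an m×n real matrix with entries a_{ij}, let 1 ≤ k ≤ m, let l, u, x ∈ ℝ^n with l_j ≤ x_j ≤ u_j for all j, let β ∈ [0,1]^n, and let P be a subset of {1,…,m} with |P| ≥ k. Then Q_k(Ax) ≥ Σ_{j=1}^n (1 − β_j) · ( min_{i ∈ P} a_{ij} ) · (x_j − l_j) + Σ_{j=1}^n β_j · ( max_{i ∈ P} a_{ij} ) · (x_j − u_j) + min_{i ∈ P} Σ_{j=1}^n (1 − β_j) a_{ij} l_j + min_{i ∈ P} Σ_{j=1}^n β_j a_{ij} u_j. -/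
/-- Among any `k` coordinates of `y`, one is at most the `k`-th largest coordinate. -/
lemma exists_mem_le_Qk {m k : ℕ} (hk : 1 ≤ k) (hkm : k ≤ m) (y : Fin m → ℝ)
    (P : Finset (Fin m)) (hP : k ≤ P.card) : ∃ i ∈ P, y i ≤ Qk k y := by
  have h : m - k < m := by omega
  -- The rows at the `m - k + 1` lowest sorted positions are too many to avoid `P`.
  let S : Finset (Fin m) := (Finset.Iic (⟨m - k, h⟩ : Fin m)).map (Tuple.sort y).toEmbedding
  have hS : S.card = m - k + 1 := by simp [S]
  have hnd : ¬ Disjoint P S := by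
    intro hd
    have h1 := Finset.card_union_of_disjoint hd
    have h2 := Finset.card_le_univ (P ∪ S)
    rw [Fintype.card_fin] at h2
    omega
  obtain ⟨i, hiP, hiS⟩ := Finset.not_disjoint_iff.mp hnd
  obtain ⟨p, hp, rfl⟩ := Finset.mem_map.mp hiS
  refine ⟨_, hiP, ?_⟩
  rw [Qk, dif_pos h]
  exact Tuple.monotone_sort y (Finset.mem_Iic.mp hp)

theorem general_subset_constraint (m n k : ℕ) (hk : 1 ≤ k) (hkm : k ≤ m)
    (A : Matrix (Fin m) (Fin n) ℝ)
    (l u x : Fin n → ℝ) (hlx : ∀ j, l j ≤ x j) (hxu : ∀ j, x j ≤ u j)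
    (β : Fin n → ℝ) (hβ : ∀ j, 0 ≤ β j ∧ β j ≤ 1)
    (P : Finset (Fin m)) (hP : k ≤ P.card) :
    Qk k (A.mulVec x) ≥
      (∑ j, (1 - β j) * (P.inf' (Finset.card_pos.mp (by omega)) fun i => A i j) * (x j - l j)) +
      (∑ j, β j * (P.sup' (Finset.card_pos.mp (by omega)) fun i => A i j) * (x j - u j)) +
      (P.inf' (Finset.card_pos.mp (by omega)) fun i => ∑ j, (1 - β j) * A i j * l j) +
      (P.inf' (Finset.card_pos.mp (by omega)) fun i => ∑ j, β j * A i j * u j) := by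
  obtain ⟨i, hi, hle⟩ := exists_mem_le_Qk hk hkm (A.mulVec x) P hP
  refine ge_iff_le.mpr (le_trans ?_ hle)
  have hsplit : A.mulVec x i =
      (∑ j, (1 - β j) * A i j * (x j - l j)) + (∑ j, β j * A i j * (x j - u j)) +
      (∑ j, (1 - β j) * A i j * l j) + (∑ j, β j * A i j * u j) := by
    simp only [Matrix.mulVec, dotProduct, ← Finset.sum_add_distrib]
    exact Finset.sum_congr rfl fun j _ => by ring
  rw [hsplit]
  refine add_le_add (add_le_add (add_le_add ?_ ?_) ?_) ?_
  · refine Finset.sum_le_sum fun j _ => ?_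
    exact mul_le_mul_of_nonneg_right
      (mul_le_mul_of_nonneg_left (Finset.inf'_le (fun i => A i j) hi) (by linarith [(hβ j).2]))
      (by linarith [hlx j])
  · refine Finset.sum_le_sum fun j _ => ?_
    -- The factor `x j - u j` is nonpositive, so the maximum over `P` gives the lower bound.
    exact mul_le_mul_of_nonpos_right
      (mul_le_mul_of_nonneg_left (Finset.le_sup' (fun i => A i j) hi) (hβ j).1)
      (by linarith [hxu j])
  · exact Finset.inf'_le (fun i => ∑ j, (1 - β j) * A i j * l j) hi
  · exact Finset.inf'_le (fun i => ∑ j, β j * A i j * u j) hi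
end
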